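/- Let w > 1/4, β = √(w - 1/4), S₁ = -1/2 + iβ, S₂ = -1/2 - iβ, and let y be a real number with -1 ≤ y < 1. Then for every z > 0, e^{zS₁} + e^{zS₂} = 2·e^{-z/2}·cos(βz), and the interchange identity ∑_{l=0}^∞ (∫_0^∞ e^{-zl}·2e^{-z/2}cos(βz) dz)·P_l(y) = ∫_0^∞ 2e^{-z/2}cos(βz)·(∑_{l=0}^∞ e^{-zl}·P_l(y)) dz holds, with ∑_{l=0}^∞ e^{-zl}·P_l(y) = 1/√(e^{-2z} - 2e^{-z}y + 1) for every z > 0. -/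

import Mathlib

open Filter Topology

/-- The Legendre polynomials `P l` on `ℝ`, i.e. the orthogonal polynomials on `[-1,1]`
normalized by `P l 1 = 1`, defined via the Bonnet recurrence
`P 0 y = 1`, `P 1 y = y`, `(n+2) • P (n+2) y = (2n+3) y P (n+1) y - (n+1) P n y`. -/
noncomputable def legendreP : ℕ → ℝ → ℝ
  | 0, _ => 1
  | 1, y => y
  | (n + 2), y =>
      ((2 * (n : ℝ) + 3) * y * legendreP (n + 1) y - ((n : ℝ) + 1) * legendreP n y) / ((n : ℝ) + 2)


/- For `-1 ≤ y < 1` the partial sums of `∑ P_l(y)` are bounded, so by Abel summation the partial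
sums of `∑ e^{-zl} P_l(y)` are bounded uniformly in `z > 0`, and dominated convergence applies to
every integrable weight. The boundedness comes from writing Bonnet's recurrence as
`2 (1 - y) P_{l+1} = 2 P_{l+1} - P_{l+2} - P_l + (P_l - P_{l+2}) / (2l + 3)`, where the first part
telescopes and the second is a telescoping difference against a decreasing weight. The value of
the inner sum follows from the differential equation `(1 - 2yu + u²) G' = (y - u) G` of the
generating function, which makes `G √(1 - 2yu + u²)` constant. -/

open MeasureTheory

section AbelSummation

variable {E : Type*} [NormedAddCommGroup E] [NormedSpace ℝ E] {C : ℝ}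

theorem norm_sum_range_smul_le_of_antitone {φ : ℕ → ℝ} {a : ℕ → E} (hφ : Antitone φ)
    (hφ₀ : ∀ n, 0 ≤ φ n) (ha : ∀ n, ‖∑ l ∈ Finset.range n, a l‖ ≤ C) (N : ℕ) :
    ‖∑ l ∈ Finset.range N, φ l • a l‖ ≤ φ 0 * C := by
  set A : ℕ → E := fun n ↦ ∑ l ∈ Finset.range n, a l
  have hdiff (l : ℕ) : ‖(φ (l + 1) - φ l) • A (l + 1)‖ ≤ (φ l - φ (l + 1)) * C := by
    rw [norm_smul, Real.norm_eq_abs, abs_sub_comm, abs_of_nonneg (sub_nonneg.2 (hφ l.le_succ))]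
    exact mul_le_mul_of_nonneg_left (ha _) (sub_nonneg.2 (hφ l.le_succ))
  calc
    ‖∑ l ∈ Finset.range N, φ l • a l‖
      = ‖φ (N - 1) • A N - ∑ l ∈ Finset.range (N - 1), (φ (l + 1) - φ l) • A (l + 1)‖ := by
        rw [Finset.sum_range_by_parts]
    _ ≤ φ (N - 1) * C + ∑ l ∈ Finset.range (N - 1), (φ l - φ (l + 1)) * C := by
        refine (norm_sub_le _ _).trans (add_le_add ?_ (norm_sum_le_of_le _ fun l _ ↦ hdiff l))
        rw [norm_smul, Real.norm_of_nonneg (hφ₀ _)]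
        exact mul_le_mul_of_nonneg_left (ha N) (hφ₀ _)
    _ = φ 0 * C := by rw [← Finset.sum_mul, Finset.sum_range_sub', ← add_mul]; ring

theorem tendsto_sum_range_smul_integral_of_antitone {α : Type*} [MeasurableSpace α]
    {μ : Measure α} {φ : ℕ → α → ℝ} {a : ℕ → ℝ} {f : α → ℝ} {g : α → E}
    (hg : Integrable g μ) (hφm : ∀ l, AEStronglyMeasurable (φ l) μ)
    (hφ : ∀ᵐ x ∂μ, Antitone (φ · x)) (hφ₀ : ∀ᵐ x ∂μ, ∀ l, 0 ≤ φ l x) (hφ₁ : ∀ᵐ x ∂μ, φ 0 x ≤ 1)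
    (ha : ∀ n, |∑ l ∈ Finset.range n, a l| ≤ C)
    (hf : ∀ᵐ x ∂μ,
      Tendsto (fun N ↦ ∑ l ∈ Finset.range N, φ l x * a l) atTop (𝓝 (f x))) :
    Tendsto (fun N ↦ ∑ l ∈ Finset.range N, a l • ∫ x, φ l x • g x ∂μ) atTop
      (𝓝 (∫ x, f x • g x ∂μ)) := by
  have hint (l : ℕ) : Integrable (fun x ↦ a l • φ l x • g x) μ := by
    refine (hg.bdd_smul 1 (hφm l) ?_).smul (a l)
    filter_upwards [hφ, hφ₀, hφ₁] with x hx hx₀ hx₁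
    rw [Real.norm_of_nonneg (hx₀ l)]
    exact (hx l.zero_le).trans hx₁
  have hsum (N : ℕ) : ∑ l ∈ Finset.range N, a l • ∫ x, φ l x • g x ∂μ =
      ∫ x, (∑ l ∈ Finset.range N, φ l x * a l) • g x ∂μ := by
    simp_rw [Finset.sum_smul, mul_comm (φ _ _), mul_smul]
    rw [integral_finsetSum _ fun l _ ↦ hint l]
    simp_rw [integral_smul]
  simp_rw [hsum]
  refine tendsto_integral_of_dominated_convergence (fun x ↦ C * ‖g x‖) (fun N ↦ ?_)
    (hg.norm.const_mul C) (fun N ↦ ?_) ?_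
  · exact (Finset.aestronglyMeasurable_fun_sum _ fun l _ ↦ (hφm l).mul_const _).smul
      hg.aestronglyMeasurable
  · filter_upwards [hφ, hφ₀, hφ₁] with x hx hx₀ hx₁
    have hC : 0 ≤ C := (abs_nonneg _).trans (ha 0)
    rw [norm_smul]
    gcongr
    exact (norm_sum_range_smul_le_of_antitone hx hx₀ ha N).trans (mul_le_of_le_one_left hC hx₁)
  · filter_upwards [hf] with x hx using hx.smul_const (g x)

end AbelSummation

section PowerSeries

theorem mem_eball_zero_one_of_norm_lt_one {E : Type*} [SeminormedAddCommGroup E] {x : E}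
    (hx : ‖x‖ < 1) : x ∈ Metric.eball 0 1 := by
  simpa [← ofReal_norm] using hx

variable {𝕜 : Type*} [NontriviallyNormedField 𝕜]

open FormalMultilinearSeries in
theorem hasFPowerSeriesOnBall_tsum_mul_pow [CompleteSpace 𝕜] {a : ℕ → 𝕜} {C : ℝ}
    (ha : ∀ n, ‖a n‖ ≤ C) :
    HasFPowerSeriesOnBall (fun u ↦ ∑' n, a n * u ^ n) (ofScalars 𝕜 a) 0 1 := by
  have hradius : 1 ≤ (ofScalars 𝕜 a).radius := by
    refine mod_cast (ofScalars 𝕜 a).le_radius_of_bound C (r := 1) fun n ↦ ?_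
    simpa [ofScalars_norm] using ha n
  have hsum : (ofScalars 𝕜 a).sum = fun u ↦ ∑' n, a n * u ^ n := by
    ext u
    simp_rw [FormalMultilinearSeries.sum, ofScalars_apply_eq, smul_eq_mul]
  exact hsum ▸ ((ofScalars 𝕜 a).hasFPowerSeriesOnBall (one_pos.trans_le hradius)).mono
    one_pos hradius

theorem hasSum_deriv_of_hasFPowerSeriesOnBall {F : Type*} [NormedAddCommGroup F] [NormedSpace 𝕜 F]
    [CompleteSpace F] {f : 𝕜 → F} {p : FormalMultilinearSeries 𝕜 𝕜 F} {x u : 𝕜} {r : ENNReal}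
    (hf : HasFPowerSeriesOnBall f p x r) (hu : u ∈ Metric.eball 0 r) :
    HasSum (fun n ↦ u ^ n • (n + 1) • p.coeff (n + 1)) (deriv f (x + u)) := by
  have hfderiv := (hf.fderiv.hasSum hu).mapL (ContinuousLinearMap.apply 𝕜 F 1)
  simpa [FormalMultilinearSeries.apply_eq_pow_smul_coeff] using hfderiv

end PowerSeries

section LegendrePolynomials

variable {y u : ℝ}

theorem legendreP_zero (y : ℝ) : legendreP 0 y = 1 := by rw [legendreP]

theorem legendreP_one (y : ℝ) : legendreP 1 y = y := by rw [legendreP]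

theorem add_two_mul_legendreP_add_two (n : ℕ) (y : ℝ) :
    (n + 2) * legendreP (n + 2) y =
      (2 * n + 3) * y * legendreP (n + 1) y - (n + 1) * legendreP n y := by
  rw [legendreP, mul_div_cancel₀ _ (by positivity)]

theorem continuous_legendreP (n : ℕ) : Continuous (legendreP n) := by
  induction n using Nat.twoStepInduction with
  | zero => exact continuous_const.congr fun y ↦ (legendreP_zero y).symm
  | one => exact continuous_id.congr fun y ↦ (legendreP_one y).symm
  | more n ih₀ ih₁ =>
    have hrec : legendreP (n + 2) = fun y ↦
        ((2 * n + 3) * y * legendreP (n + 1) y - (n + 1) * legendreP n y) / (n + 2) := by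
      ext y; rw [legendreP]
    rw [hrec]
    fun_prop

-- Bonnet's recurrence contracts `P_{n+1} - y P_n` to at most `|y P_{n+1} - P_n|` in absolute value,
-- and either square completes the quadratic form on the left.
theorem legendreP_sq_add_sq_sub_le (n : ℕ) (y : ℝ) :
    legendreP (n + 1) y ^ 2 + legendreP n y ^ 2 - 2 * y * legendreP (n + 1) y * legendreP n y ≤
      1 - y ^ 2 := by
  induction n with
  | zero => rw [legendreP_zero, legendreP_one]; linarith
  | succ n ih =>
    set a := legendreP n y
    set b := legendreP (n + 1) y
    set c := legendreP (n + 2) y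
    have hrec : (n + 2) * (c - y * b) = (n + 1) * (y * b - a) := by
      linear_combination add_two_mul_legendreP_add_two n y
    have hcontr : (c - y * b) ^ 2 ≤ (y * b - a) ^ 2 := by
      rw [eq_div_of_mul_eq (by positivity) ((mul_comm _ _).trans hrec), mul_div_right_comm, mul_pow]
      refine mul_le_of_le_one_left (sq_nonneg _) (pow_le_one₀ (by positivity) ?_)
      rw [div_le_one (by positivity)]
      linarith
    linarith

-- The energy estimate degenerates at `y = ±1`, where the bound follows by continuity.
theorem abs_legendreP_le_one (hy : |y| ≤ 1) (n : ℕ) : |legendreP n y| ≤ 1 := by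
  have hIoo : Set.Ioo (-1) 1 ⊆ {t | |legendreP n t| ≤ 1} := fun t ⟨ht₁, ht₂⟩ ↦ by
    have hpos : 0 < 1 - t ^ 2 := by nlinarith
    have henergy := legendreP_sq_add_sq_sub_le n t
    refine (sq_le_one_iff_abs_le_one _).1 (le_of_mul_le_mul_left ?_ hpos)
    linarith [sq_nonneg (legendreP (n + 1) t - t * legendreP n t)]
  have hclosed : IsClosed {t | |legendreP n t| ≤ 1} :=
    isClosed_le (continuous_legendreP n).abs continuous_const
  have hIcc := closure_minimal hIoo hclosed
  rw [closure_Ioo (by norm_num)] at hIcc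
  exact hIcc (abs_le.1 hy)

theorem two_mul_one_sub_mul_legendreP_succ (n : ℕ) (y : ℝ) :
    2 * (1 - y) * legendreP (n + 1) y =
      (2 * legendreP (n + 1) y - legendreP (n + 2) y - legendreP n y) +
        (2 * n + 3 : ℝ)⁻¹ * (legendreP n y - legendreP (n + 2) y) := by
  have hn : (2 * n + 3 : ℝ) ≠ 0 := by positivity
  field_simp
  linear_combination 2 * add_two_mul_legendreP_add_two n y

theorem two_mul_one_sub_mul_sum_range_succ_legendreP (y : ℝ) (N : ℕ) :
    2 * (1 - y) * ∑ l ∈ Finset.range (N + 1), legendreP l y =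
      (1 - y) + (legendreP N y - legendreP (N + 1) y) +
        ∑ l ∈ Finset.range N, (2 * l + 3 : ℝ)⁻¹ * (legendreP l y - legendreP (l + 2) y) := by
  induction N with
  | zero =>
    simp only [zero_add, Finset.sum_range_one, Finset.sum_range_zero, legendreP_zero, legendreP_one]
    ring
  | succ N ih =>
    rw [Finset.sum_range_succ, mul_add, ih, two_mul_one_sub_mul_legendreP_succ,
      Finset.sum_range_succ _ N]
    ring

theorem abs_sum_range_inv_mul_legendreP_sub_le (hy : |y| ≤ 1) (N : ℕ) :
    |∑ l ∈ Finset.range N, (2 * l + 3 : ℝ)⁻¹ * (legendreP l y - legendreP (l + 2) y)| ≤ 4 / 3 := by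
  have hanti : Antitone fun l : ℕ ↦ (2 * l + 3 : ℝ)⁻¹ := fun l m hlm ↦ by
    dsimp only
    gcongr
  have htelescope (n : ℕ) : ‖∑ l ∈ Finset.range n, (legendreP l y - legendreP (l + 2) y)‖ ≤ 4 := by
    have hsum : ∑ l ∈ Finset.range n, (legendreP l y - legendreP (l + 2) y) =
        legendreP 0 y + legendreP 1 y - (legendreP n y + legendreP (n + 1) y) := by
      rw [← Finset.sum_range_sub' fun l ↦ legendreP l y + legendreP (l + 1) y]
      exact Finset.sum_congr rfl fun l _ ↦ by ring
    rw [hsum]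
    have h (l : ℕ) := abs_le.1 (abs_legendreP_le_one hy l)
    exact abs_le.2 ⟨by linarith [h 0, h 1, h n, h (n + 1)], by linarith [h 0, h 1, h n, h (n + 1)]⟩
  refine (norm_sum_range_smul_le_of_antitone hanti (fun l ↦ by positivity) htelescope N).trans ?_
  norm_num

theorem abs_sum_range_legendreP_le (hy₁ : -1 ≤ y) (hy₂ : y < 1) (N : ℕ) :
    |∑ l ∈ Finset.range N, legendreP l y| ≤ 3 / (1 - y) := by
  have hpos : 0 < 1 - y := sub_pos.2 hy₂
  have hy : |y| ≤ 1 := abs_le.2 ⟨hy₁, hy₂.le⟩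
  cases N with
  | zero => simpa using div_nonneg zero_le_three hpos.le
  | succ N =>
    have hcorr := abs_le.1 (abs_sum_range_inv_mul_legendreP_sub_le hy N)
    have hN := abs_le.1 (abs_legendreP_le_one hy N)
    have hN' := abs_le.1 (abs_legendreP_le_one hy (N + 1))
    have hsum := two_mul_one_sub_mul_sum_range_succ_legendreP y N
    rw [le_div_iff₀ hpos, ← abs_of_pos hpos, ← abs_mul, abs_le]
    constructor <;> linarith

/-- The generating function `G(u) = ∑ P_n(y) uⁿ` of the Legendre polynomials, as a function of `u`
for fixed `y`. It is the sum of a convergent series for `|y| ≤ 1` and `|u| < 1`. -/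
noncomputable def legendreGenFun (y u : ℝ) : ℝ := ∑' n, legendreP n y * u ^ n

theorem hasFPowerSeriesOnBall_legendreGenFun (hy : |y| ≤ 1) :
    HasFPowerSeriesOnBall (legendreGenFun y)
      (FormalMultilinearSeries.ofScalars ℝ (legendreP · y)) 0 1 :=
  hasFPowerSeriesOnBall_tsum_mul_pow (abs_legendreP_le_one hy)

theorem hasSum_legendreGenFun (hy : |y| ≤ 1) (hu : |u| < 1) :
    HasSum (fun n ↦ legendreP n y * u ^ n) (legendreGenFun y u) := by
  simpa [mul_comm] using
    (hasFPowerSeriesOnBall_legendreGenFun hy).hasSum (mem_eball_zero_one_of_norm_lt_one hu)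

theorem hasSum_deriv_legendreGenFun (hy : |y| ≤ 1) (hu : |u| < 1) :
    HasSum (fun n : ℕ ↦ (n + 1) * legendreP (n + 1) y * u ^ n) (deriv (legendreGenFun y) u) := by
  simpa [mul_comm] using
    hasSum_deriv_of_hasFPowerSeriesOnBall (hasFPowerSeriesOnBall_legendreGenFun hy)
      (mem_eball_zero_one_of_norm_lt_one hu)

theorem legendreGenFun_ode (hy : |y| ≤ 1) (hu : |u| < 1) :
    (1 - 2 * y * u + u ^ 2) * deriv (legendreGenFun y) u = (y - u) * legendreGenFun y u := by
  have hG := hasSum_legendreGenFun hy hu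
  have hG' := hasSum_deriv_legendreGenFun hy hu
  set G := legendreGenFun y u
  set G' := deriv (legendreGenFun y) u
  have hG_succ : HasSum (fun n ↦ legendreP (n + 1) y * u ^ (n + 1)) (G - 1) := by
    simpa [legendreP_zero] using (hasSum_nat_add_iff' 1).2 hG
  have hG'_succ :
      HasSum (fun n : ℕ ↦ (n + 2) * legendreP (n + 2) y * u ^ (n + 1)) (G' - y) := by
    simpa [legendreP_one, add_assoc, one_add_one_eq_two] using (hasSum_nat_add_iff' 1).2 hG'
  have huG' : HasSum (fun n : ℕ ↦ n * legendreP n y * u ^ n) (u * G') := by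
    rw [← hasSum_nat_add_iff' 1]
    simpa [pow_succ, mul_comm, mul_left_comm, mul_assoc] using hG'.mul_left u
  have hzero := ((hG'_succ.sub (hG'.mul_left (2 * y * u))).sub (hG_succ.mul_left y)).add
    ((huG'.add hG).mul_left u)
  have hterm (n : ℕ) : (n + 2) * legendreP (n + 2) y * u ^ (n + 1) -
      2 * y * u * ((n + 1) * legendreP (n + 1) y * u ^ n) -
      y * (legendreP (n + 1) y * u ^ (n + 1)) +
      u * (n * legendreP n y * u ^ n + legendreP n y * u ^ n) = 0 := by
    linear_combination u ^ (n + 1) * add_two_mul_legendreP_add_two n y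
  simp only [hterm] at hzero
  linear_combination hzero.unique hasSum_zero

theorem one_sub_two_mul_mul_add_sq_pos (hy : |y| ≤ 1) (hu : |u| < 1) :
    0 < 1 - 2 * y * u + u ^ 2 := by
  have hyu : y * u ≤ |u| := by
    calc y * u ≤ |y| * |u| := (le_abs_self _).trans (abs_mul y u).le
      _ ≤ |u| := mul_le_of_le_one_left (abs_nonneg u) hy
  nlinarith [sq_abs u]

theorem legendreGenFun_eq (hy : |y| ≤ 1) (hu : |u| < 1) :
    legendreGenFun y u = 1 / √(1 - 2 * y * u + u ^ 2) := by
  let F (v : ℝ) : ℝ := legendreGenFun y v * √(1 - 2 * y * v + v ^ 2)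
  have hF (v : ℝ) (hv : v ∈ Set.Ioo (-1) 1) : HasDerivAt F 0 v := by
    replace hv : |v| < 1 := abs_lt.2 hv
    have hpos := one_sub_two_mul_mul_add_sq_pos hy hv
    have hG : HasDerivAt (legendreGenFun y) (deriv (legendreGenFun y) v) v :=
      ((hasFPowerSeriesOnBall_legendreGenFun hy).analyticOnNhd v
        (mem_eball_zero_one_of_norm_lt_one hv)).differentiableAt.hasDerivAt
    have hquad : HasDerivAt (fun v ↦ 1 - 2 * y * v + v ^ 2) (-(2 * y) + 2 * v) v := by
      simpa using! (((hasDerivAt_id v).const_mul (2 * y)).const_sub 1).add (hasDerivAt_pow 2 v)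
    refine (hG.mul (hquad.sqrt hpos.ne')).congr_deriv ?_
    have hsqrt := (Real.sqrt_pos.2 hpos).ne'
    field_simp
    rw [Real.sq_sqrt hpos.le]
    linear_combination legendreGenFun_ode hy hv
  have hconst : F u = F 0 := isOpen_Ioo.is_const_of_deriv_eq_zero isPreconnected_Ioo
    (fun v hv ↦ (hF v hv).differentiableAt.differentiableWithinAt) (fun v hv ↦ (hF v hv).deriv)
    (abs_lt.1 hu) (by simp)
  have hzero : F 0 = 1 := by
    have hG₀ : legendreGenFun y 0 = 1 :=
      (tsum_eq_single 0 fun n hn ↦ by simp [hn]).trans (by simp [legendreP_zero])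
    simp [F, hG₀]
  exact eq_one_div_of_mul_eq_one_left (hconst.trans hzero)

theorem hasSum_exp_neg_mul_legendreP (hy : |y| ≤ 1) {z : ℝ} (hz : 0 < z) :
    HasSum (fun l : ℕ ↦ Real.exp (-(z * l)) * legendreP l y)
      (1 / √(Real.exp (-2 * z) - 2 * Real.exp (-z) * y + 1)) := by
  have hu : |Real.exp (-z)| < 1 := by simpa using hz
  have hpow (l : ℕ) : Real.exp (-(z * l)) = Real.exp (-z) ^ l := by
    rw [← Real.exp_nat_mul]; ring_nf
  have hquad : Real.exp (-2 * z) - 2 * Real.exp (-z) * y + 1 =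
      1 - 2 * y * Real.exp (-z) + Real.exp (-z) ^ 2 := by
    rw [← Real.exp_nat_mul]; push_cast; ring_nf
  rw [hquad, ← legendreGenFun_eq hy hu]
  simpa only [hpow, mul_comm] using hasSum_legendreGenFun hy hu

end LegendrePolynomials

theorem interchange_sum_integral_general {E : Type*} [NormedAddCommGroup E] [NormedSpace ℝ E]
    {y : ℝ} (hy₁ : -1 ≤ y) (hy₂ : y < 1) {g : ℝ → E} (hg : IntegrableOn g (Set.Ioi 0)) :
    (∀ z : ℝ, 0 < z → HasSum (fun l : ℕ ↦ Real.exp (-(z * l)) * legendreP l y)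
      (1 / √(Real.exp (-2 * z) - 2 * Real.exp (-z) * y + 1))) ∧
    Tendsto (fun N ↦ ∑ l ∈ Finset.range N,
        legendreP l y • ∫ z in Set.Ioi (0 : ℝ), Real.exp (-(z * l)) • g z) atTop
      (𝓝 (∫ z in Set.Ioi (0 : ℝ), (∑' l : ℕ, Real.exp (-(z * l)) * legendreP l y) • g z)) := by
  have hsum (z : ℝ) (hz : 0 < z) := hasSum_exp_neg_mul_legendreP (abs_le.2 ⟨hy₁, hy₂.le⟩) hz
  have hae {p : ℝ → Prop} (hp : ∀ z > 0, p z) : ∀ᵐ z ∂volume.restrict (Set.Ioi 0), p z :=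
    ae_restrict_of_forall_mem measurableSet_Ioi hp
  refine ⟨hsum, tendsto_sum_range_smul_integral_of_antitone hg (fun l ↦ by fun_prop)
    (hae fun z hz l m hlm ↦ ?_) (hae fun z _ l ↦ (Real.exp_pos _).le) (hae fun z _ ↦ by simp)
    (abs_sum_range_legendreP_le hy₁ hy₂)
    (hae fun z hz ↦ (hsum z hz).summable.hasSum.tendsto_sum_nat)⟩
  dsimp only
  gcongr

theorem exp_add_mul_I_add_exp_sub_mul_I (a b : ℂ) :
    Complex.exp (a + b * Complex.I) + Complex.exp (a - b * Complex.I) =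
      2 * Complex.exp a * Complex.cos b := by
  rw [sub_eq_add_neg, ← neg_mul, Complex.exp_add, Complex.exp_add, ← mul_add, ← Complex.two_cos]
  ring

theorem integrableOn_exp_neg_mul_mul_cos_Ioi {b : ℝ} (hb : 0 < b) (β c : ℝ) :
    IntegrableOn (fun z ↦ Real.exp (-b * z) * Real.cos (β * z)) (Set.Ioi c) :=
  (exp_neg_integrableOn_Ioi c hb).mul_bdd (c := 1) (by fun_prop)
    (.of_forall fun z ↦ Real.abs_cos_le_one (β * z))

/-- For `w > 1/4`, `β = √(w-1/4)`, `S₁ = -1/2 + iβ`, `S₂ = -1/2 - iβ` and `-1 ≤ y < 1`: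
`e^{zS₁} + e^{zS₂} = 2 e^{-z/2} cos(βz)` for `z > 0`; the generating-function sum
`∑ e^{-zl} P l y = 1/√(e^{-2z} - 2e^{-z}y + 1)` holds for `z > 0`; and the interchange of
summation and integration
`∑_l (∫_0^∞ e^{-zl} 2e^{-z/2} cos(βz) dz) P l y = ∫_0^∞ 2e^{-z/2} cos(βz) (∑_l e^{-zl} P l y) dz`
holds. -/
theorem interchange_sum_integral (w : ℝ) (hw : 1 / 4 < w)
    (β : ℝ) (hβ : β = Real.sqrt (w - 1 / 4))
    (S₁ S₂ : ℂ) (hS₁ : S₁ = -1 / 2 + Complex.I * β) (hS₂ : S₂ = -1 / 2 - Complex.I * β)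
    (y : ℝ) (hy₁ : -1 ≤ y) (hy₂ : y < 1) :
    (∀ z : ℝ, 0 < z →
      Complex.exp ((z : ℂ) * S₁) + Complex.exp ((z : ℂ) * S₂) =
        ((2 * Real.exp (-z / 2) * Real.cos (β * z) : ℝ) : ℂ)) ∧
    (∀ z : ℝ, 0 < z →
      HasSum (fun l : ℕ => Real.exp (-(z * (l : ℝ))) * legendreP l y)
        (1 / Real.sqrt (Real.exp (-2 * z) - 2 * Real.exp (-z) * y + 1))) ∧
    Tendsto (fun N : ℕ => ∑ l ∈ Finset.range N,
        (∫ z in Set.Ioi (0 : ℝ),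
          Real.exp (-(z * (l : ℝ))) * (2 * Real.exp (-z / 2) * Real.cos (β * z))) *
          legendreP l y) atTop
      (𝓝 (∫ z in Set.Ioi (0 : ℝ), 2 * Real.exp (-z / 2) * Real.cos (β * z) *
          ∑' l : ℕ, Real.exp (-(z * (l : ℝ))) * legendreP l y)) := by
  have hg : IntegrableOn (fun z ↦ 2 * Real.exp (-z / 2) * Real.cos (β * z)) (Set.Ioi 0) := by
    refine Integrable.congr
      ((integrableOn_exp_neg_mul_mul_cos_Ioi one_half_pos β 0).const_mul 2) (.of_forall fun z ↦ ?_)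
    ring_nf
  obtain ⟨hsum, htendsto⟩ := interchange_sum_integral_general hy₁ hy₂ hg
  refine ⟨fun z _ ↦ ?_, hsum, by simpa only [smul_eq_mul, mul_comm] using htendsto⟩
  have hexp := exp_add_mul_I_add_exp_sub_mul_I (-z / 2) (β * z)
  rw [hS₁, hS₂]
  push_cast
  rw [← hexp]
  ring_nf
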